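/- Let K be a UFD of characteristic p > 0 and let d be a nonzero K-derivation of K[x,y] with d* = 0, K[x,y]^d ≠ K[x^p,y^p], and d(x), d(y) coprime. Let g ∈ K[x,y] be such that g − g_{(p)} is nonzero, belongs to K[x,y]^d, and has minimal total degree among all nonzero polynomials of the form h − h_{(p)} (h ∈ K[x,y]) belonging to K[x,y]^d. Then ḡ = gcd(∂g/∂x, ∂g/∂y) belongs to K[x^p, y^p]. -/

import Mathlib

/-!
Put `G = g - g_(p)`, which has the same partial derivatives as `g`. Since `d G = 0` and `d x`, `d y`
are coprime, the Hamiltonian derivation `G_x ∂_y - G_y ∂_x` equals `h • d` for some `h`, and `h` is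
associated to `gcd(g_x, g_y)`. A Hamiltonian derivation is divergence-free, and
`(h • d)* = h d* + d h`, so `d h = 0`. Moreover `deg h < deg G`, because `h` divides a nonzero
partial derivative of `G`; the minimality of `deg G` then forces `h = h_(p) ∈ K[x^p, y^p]`.
-/

open MvPolynomial

/-- `f_{(p)}`: the coefficient `a₀₀ ∈ K[x^p,y^p]` in the unique representation
`f = Σ_{0≤i,j<p} a_{ij} x^i y^j` with `a_{ij} ∈ K[x^p,y^p]`; concretely it is the
sum of the monomials of `f` in which both exponents are divisible by `p`. -/
noncomputable def pPart {K : Type*} [CommRing K] (p : ℕ)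
    (f : MvPolynomial (Fin 2) K) : MvPolynomial (Fin 2) K :=
  ∑ m ∈ f.support.filter (fun m => ∀ i, p ∣ m i), monomial m (coeff m f)

theorem exists_mul_eq_neg_and_mul_eq_of_isRelPrime {R : Type*} [CommRing R]
    [NoZeroDivisors R] [DecompositionMonoid R] {a b u v : R} (hab : IsRelPrime a b)
    (h : a * u + b * v = 0) : ∃ c, c * a = -v ∧ c * b = u := by
  rcases eq_or_ne a 0 with rfl | ha
  · obtain ⟨b, rfl⟩ := isRelPrime_zero_left.1 hab
    have hv : v = 0 := by rwa [zero_mul, zero_add, b.isUnit.mul_right_eq_zero] at h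
    exact ⟨u * ↑b⁻¹, by simp [hv], by simp⟩
  · obtain ⟨c, rfl⟩ : a ∣ v := hab.dvd_of_dvd_mul_left ⟨-u, by linear_combination h⟩
    exact ⟨-c, by ring, mul_left_cancel₀ ha (by linear_combination -h)⟩

theorem associated_of_dvd_mul_of_isRelPrime {M : Type*} [CommMonoidWithZero M] [IsCancelMulZero M]
    {a b c g : M} (hab : IsRelPrime a b) (hcg : c ∣ g) (ha : g ∣ c * a) (hb : g ∣ c * b) :
    Associated c g := by
  rcases eq_or_ne c 0 with rfl | hc
  · rw [zero_dvd_iff.1 hcg]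
  · obtain ⟨k, rfl⟩ := hcg
    have hk : IsUnit k := hab ((mul_dvd_mul_iff_left hc).1 ha) ((mul_dvd_mul_iff_left hc).1 hb)
    exact associated_mul_unit_right c k hk

theorem derivation_eq_zero_of_mem_adjoin_pow {R A M : Type*} [CommRing R] [CommRing A]
    [AddCommGroup M] [Algebra R A] [Module A M] [Module R M] (p : ℕ) [CharP A p]
    (D : Derivation R A M) {s : Set A} (hs : s ⊆ Set.range (· ^ p)) {a : A}
    (ha : a ∈ Algebra.adjoin R s) : D a = 0 := by
  have hD : Set.EqOn D (0 : Derivation R A M) s := by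
    intro b hb
    obtain ⟨c, rfl⟩ := hs hb
    rw [D.leibniz_pow, ← Nat.cast_smul_eq_nsmul A, CharP.cast_eq_zero, zero_smul,
      Derivation.zero_apply]
  exact Derivation.eqOn_adjoin hD ha

section MvPolynomial

variable {σ K : Type*} [CommRing K]

theorem mem_subalgebra_of_associated [IsReduced K] {S : Subalgebra K (MvPolynomial σ K)}
    {f g : MvPolynomial σ K} (hfg : Associated f g) (hf : f ∈ S) : g ∈ S := by
  obtain ⟨u, rfl⟩ := hfg
  obtain ⟨r, -, hr⟩ := isUnit_iff_eq_C_of_isReduced.1 u.isUnit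
  rw [hr]
  exact mul_mem hf (S.algebraMap_mem r)

theorem pderiv_comm (i j : σ) (f : MvPolynomial σ K) :
    pderiv i (pderiv j f) = pderiv j (pderiv i f) := by
  classical
  have hcomm : (⁅pderiv i, pderiv j⁆ : Derivation K (MvPolynomial σ K) (MvPolynomial σ K)) = 0 :=
    derivation_ext fun k => by
      rw [Derivation.commutator_apply, pderiv_X, pderiv_X, Pi.single_apply, Pi.single_apply]
      split_ifs <;> simp only [map_zero, pderiv_one, sub_zero, Derivation.zero_apply]
  exact sub_eq_zero.1 (DFunLike.congr_fun hcomm f)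

theorem totalDegree_pderiv_lt {i : σ} {f : MvPolynomial σ K} (hf : pderiv i f ≠ 0) :
    (pderiv i f).totalDegree < f.totalDegree := by
  have hsucc : ∀ m ∈ (pderiv i f).support, (m.sum fun _ e => e) < f.totalDegree := by
    intro m hm
    have hm' : m + Finsupp.single i 1 ∈ f.support := by
      rw [mem_support_iff, coeff_pderiv] at hm
      rw [mem_support_iff]
      exact left_ne_zero_of_mul hm
    have hle := le_totalDegree hm'
    rwa [Finsupp.sum_add_index' (fun _ => rfl) (fun _ _ _ => rfl),
      Finsupp.sum_single_index rfl] at hle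
  obtain ⟨m, hm⟩ := support_nonempty.2 hf
  exact (Finset.sup_lt_iff (pos_of_gt (hsucc m hm))).2 hsucc

theorem totalDegree_lt_of_dvd_pderiv [IsDomain K] {i : σ} {f h : MvPolynomial σ K}
    (hh : h ∣ pderiv i f) (hf : pderiv i f ≠ 0) : h.totalDegree < f.totalDegree :=
  (totalDegree_le_of_dvd_of_isDomain hh hf).trans_lt (totalDegree_pderiv_lt hf)

theorem dvd_of_pderiv_eq_zero [NoZeroDivisors K] (p : ℕ) [CharP K p] {i : σ}
    {f : MvPolynomial σ K} (hf : pderiv i f = 0) {m : σ →₀ ℕ} (hm : coeff m f ≠ 0) : p ∣ m i := by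
  rcases Nat.eq_zero_or_pos (m i) with hmi | hmi
  · exact hmi ▸ dvd_zero p
  · have hcoeff : coeff m f * (m i : K) = 0 := by
      have := coeff_pderiv (i := i) f (m - Finsupp.single i 1)
      rw [hf, coeff_zero, Finsupp.sub_add_single_one_cancel hmi.ne', Finsupp.tsub_apply,
        Finsupp.single_eq_same, ← Nat.cast_add_one, Nat.sub_add_cancel hmi] at this
      exact this.symm
    exact (CharP.cast_eq_zero_iff K p _).1 ((mul_eq_zero.1 hcoeff).resolve_left hm)

variable [Fintype σ]

theorem derivation_apply_eq_sum_pderiv {M : Type*} [AddCommGroup M] [Module K M]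
    [Module (MvPolynomial σ K) M]
    (D : Derivation K (MvPolynomial σ K) M) (f : MvPolynomial σ K) :
    D f = ∑ i, pderiv i f • D (X i) := by
  classical
  induction f using MvPolynomial.induction_on with
  | C a => simp only [derivation_C, zero_smul, Finset.sum_const_zero]
  | add f g hf hg => simp only [map_add, hf, hg, add_smul, Finset.sum_add_distrib]
  | mul_X f j hf =>
    simp [Derivation.leibniz, hf, add_smul, mul_smul, Finset.sum_add_distrib, Finset.smul_sum,
      pderiv_X, Pi.single_apply]

/-- The divergence `d* = ∑ ∂(d xᵢ)/∂xᵢ` of a derivation of a polynomial ring. -/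
noncomputable def divergence (d : Derivation K (MvPolynomial σ K) (MvPolynomial σ K)) :
    MvPolynomial σ K :=
  ∑ i, pderiv i (d (X i))

theorem divergence_smul (h : MvPolynomial σ K)
    (d : Derivation K (MvPolynomial σ K) (MvPolynomial σ K)) :
    divergence (h • d) = h * divergence d + d h := by
  simp only [divergence, derivation_apply_eq_sum_pderiv d h, Derivation.smul_apply, smul_eq_mul,
    pderiv_mul, Finset.sum_add_distrib, Finset.mul_sum, add_comm]

end MvPolynomial

section Plane

variable {K : Type*} [CommRing K]

/-- The Hamiltonian derivation `f_x ∂_y - f_y ∂_x`; the derivations of `K[x, y]` that kill `f` and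
have coprime coefficients divide it. -/
noncomputable def hamiltonianDerivation (f : MvPolynomial (Fin 2) K) :
    Derivation K (MvPolynomial (Fin 2) K) (MvPolynomial (Fin 2) K) :=
  pderiv 0 f • pderiv 1 - pderiv 1 f • pderiv 0

theorem hamiltonianDerivation_X_zero (f : MvPolynomial (Fin 2) K) :
    hamiltonianDerivation f (X 0) = -pderiv 1 f := by
  simp [hamiltonianDerivation]

theorem hamiltonianDerivation_X_one (f : MvPolynomial (Fin 2) K) :
    hamiltonianDerivation f (X 1) = pderiv 0 f := by
  simp [hamiltonianDerivation]

theorem divergence_hamiltonianDerivation (f : MvPolynomial (Fin 2) K) :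
    divergence (hamiltonianDerivation f) = 0 := by
  rw [divergence, Fin.sum_univ_two, hamiltonianDerivation_X_zero, hamiltonianDerivation_X_one,
    map_neg, pderiv_comm, neg_add_cancel]

theorem exists_smul_eq_hamiltonianDerivation [NoZeroDivisors K]
    [DecompositionMonoid (MvPolynomial (Fin 2) K)]
    {d : Derivation K (MvPolynomial (Fin 2) K) (MvPolynomial (Fin 2) K)}
    (hcop : IsRelPrime (d (X 0)) (d (X 1))) {f : MvPolynomial (Fin 2) K} (hf : d f = 0) :
    ∃ h : MvPolynomial (Fin 2) K, h • d = hamiltonianDerivation f := by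
  rw [derivation_apply_eq_sum_pderiv, Fin.sum_univ_two, smul_eq_mul, smul_eq_mul,
    mul_comm, mul_comm (pderiv 1 f)] at hf
  obtain ⟨h, h_zero, h_one⟩ := exists_mul_eq_neg_and_mul_eq_of_isRelPrime hcop hf
  refine ⟨h, derivation_ext (Fin.forall_fin_two.2 ⟨?_, ?_⟩)⟩
  · rw [hamiltonianDerivation_X_zero, ← h_zero, Derivation.smul_apply, smul_eq_mul]
  · rw [hamiltonianDerivation_X_one, ← h_one, Derivation.smul_apply, smul_eq_mul]

theorem apply_eq_zero_of_smul_eq_hamiltonianDerivation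
    {d : Derivation K (MvPolynomial (Fin 2) K) (MvPolynomial (Fin 2) K)} (hdiv : divergence d = 0)
    {f h : MvPolynomial (Fin 2) K} (hf : h • d = hamiltonianDerivation f) : d h = 0 := by
  simpa [hdiv, hf, divergence_hamiltonianDerivation] using (divergence_smul h d).symm

end Plane

section PthPowers

/-- The subalgebra `K[x^p, y^p]` of `K[x, y]`, where `gcd(g_x, g_y)` is to lie; it is `K` when
`p = 0`. -/
noncomputable abbrev pthPowerSubalgebra (K : Type*) [CommRing K] (p : ℕ) :
    Subalgebra K (MvPolynomial (Fin 2) K) :=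
  Algebra.adjoin K {X 0 ^ p, X 1 ^ p}

variable {K : Type*} [CommRing K]

theorem pPart_mem_pthPowerSubalgebra (p : ℕ) (f : MvPolynomial (Fin 2) K) :
    pPart p f ∈ pthPowerSubalgebra K p := by
  refine Subalgebra.sum_mem _ fun m hm => ?_
  have hpm : ∀ i, p ∣ m i := (Finset.mem_filter.1 hm).2
  obtain ⟨u, hu⟩ := hpm 0
  obtain ⟨v, hv⟩ := hpm 1
  rw [monomial_eq, Finsupp.prod_fintype _ _ fun _ => pow_zero _, Fin.prod_univ_two, hu, hv,
    pow_mul, pow_mul]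
  refine mul_mem (Subalgebra.algebraMap_mem _ _) (mul_mem (pow_mem ?_ u) (pow_mem ?_ v))
  · exact Algebra.subset_adjoin (Set.mem_insert _ _)
  · exact Algebra.subset_adjoin (Set.mem_insert_of_mem _ rfl)

theorem derivation_pPart {M : Type*} [AddCommGroup M] [Module K M]
    [Module (MvPolynomial (Fin 2) K) M] (p : ℕ) [CharP K p]
    (D : Derivation K (MvPolynomial (Fin 2) K) M) (f : MvPolynomial (Fin 2) K) :
    D (pPart p f) = 0 := by
  refine derivation_eq_zero_of_mem_adjoin_pow p D ?_ (pPart_mem_pthPowerSubalgebra p f)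
  rintro _ (rfl | rfl) <;> exact Set.mem_range_self _

theorem derivation_sub_pPart {M : Type*} [AddCommGroup M] [Module K M]
    [Module (MvPolynomial (Fin 2) K) M] (p : ℕ) [CharP K p]
    (D : Derivation K (MvPolynomial (Fin 2) K) M) (f : MvPolynomial (Fin 2) K) :
    D (f - pPart p f) = D f := by
  rw [map_sub, derivation_pPart, sub_zero]

theorem coeff_pPart (p : ℕ) (f : MvPolynomial (Fin 2) K) (m : Fin 2 →₀ ℕ) :
    coeff m (pPart p f) = if ∀ i, p ∣ m i then coeff m f else 0 := by
  classical
  simp only [pPart, coeff_sum, coeff_monomial, Finset.sum_ite_eq', Finset.mem_filter,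
    mem_support_iff]
  grind

theorem totalDegree_sub_pPart_le (p : ℕ) (f : MvPolynomial (Fin 2) K) :
    (f - pPart p f).totalDegree ≤ f.totalDegree := by
  refine totalDegree_le_of_support_subset fun m hm => ?_
  contrapose! hm
  rw [notMem_support_iff] at hm ⊢
  rw [coeff_sub, coeff_pPart, hm, ite_self, sub_zero]

theorem exists_pderiv_ne_zero [NoZeroDivisors K] (p : ℕ) [CharP K p] {f : MvPolynomial (Fin 2) K}
    (hf : f - pPart p f ≠ 0) : ∃ i, pderiv i f ≠ 0 := by
  contrapose! hf
  ext m
  rw [coeff_sub, coeff_pPart, coeff_zero, sub_eq_zero]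
  by_cases hm : coeff m f = 0
  · rw [hm, ite_self]
  · rw [if_pos fun i => dvd_of_pderiv_eq_zero p (hf i) hm]

theorem mem_pthPowerSubalgebra_of_totalDegree_lt (p : ℕ) [CharP K p]
    {d : Derivation K (MvPolynomial (Fin 2) K) (MvPolynomial (Fin 2) K)} {n : ℕ}
    (hmin : ∀ f : MvPolynomial (Fin 2) K, f - pPart p f ≠ 0 → d (f - pPart p f) = 0 →
      n ≤ (f - pPart p f).totalDegree)
    {h : MvPolynomial (Fin 2) K} (hd : d h = 0) (hn : h.totalDegree < n) :
    h ∈ pthPowerSubalgebra K p := by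
  have hh : h - pPart p h = 0 := by
    by_contra hne
    have hle := hmin h hne (by rw [derivation_sub_pPart, hd])
    exact (hle.trans (totalDegree_sub_pPart_le p h)).not_gt hn
  rw [sub_eq_zero.1 hh]
  exact pPart_mem_pthPowerSubalgebra p h

end PthPowers

theorem lemma3b_gbar_in_constants_general {K : Type*} [CommRing K] [IsDomain K]
    [DecompositionMonoid (MvPolynomial (Fin 2) K)] (p : ℕ) [CharP K p]
    (d : Derivation K (MvPolynomial (Fin 2) K) (MvPolynomial (Fin 2) K))
    (hdiv : divergence d = 0) (hcop : IsRelPrime (d (X 0)) (d (X 1)))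
    (g : MvPolynomial (Fin 2) K) (hg₁ : g - pPart p g ≠ 0) (hg₂ : d (g - pPart p g) = 0)
    (hgmin : ∀ h : MvPolynomial (Fin 2) K, h - pPart p h ≠ 0 → d (h - pPart p h) = 0 →
      (g - pPart p g).totalDegree ≤ (h - pPart p h).totalDegree)
    (gbar : MvPolynomial (Fin 2) K) (hgbar₁ : gbar ∣ pderiv 0 g) (hgbar₂ : gbar ∣ pderiv 1 g)
    (hgbar₃ : ∀ q : MvPolynomial (Fin 2) K, q ∣ pderiv 0 g → q ∣ pderiv 1 g → q ∣ gbar) :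
    gbar ∈ pthPowerSubalgebra K p := by
  obtain ⟨h, hham⟩ : ∃ h : MvPolynomial (Fin 2) K, h • d = hamiltonianDerivation g :=
    exists_smul_eq_hamiltonianDerivation hcop (derivation_sub_pPart p d g ▸ hg₂)
  have hx : pderiv 0 g = h * d (X 1) := by
    rw [← hamiltonianDerivation_X_one, ← hham, Derivation.smul_apply, smul_eq_mul]
  have hy : pderiv 1 g = -(h * d (X 0)) := by
    rw [← smul_eq_mul, ← Derivation.smul_apply, hham, hamiltonianDerivation_X_zero, neg_neg]
  have hdvd : ∀ i, h ∣ pderiv i g :=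
    Fin.forall_fin_two.2 ⟨hx ▸ dvd_mul_right _ _, hy ▸ (dvd_mul_right _ _).neg_right⟩
  have hassoc : Associated h gbar :=
    associated_of_dvd_mul_of_isRelPrime hcop (hgbar₃ h (hdvd 0) (hdvd 1))
      (dvd_neg.1 (hy ▸ hgbar₂)) (hx ▸ hgbar₁)
  have hdeg : h.totalDegree < (g - pPart p g).totalDegree := by
    obtain ⟨i, hi⟩ := exists_pderiv_ne_zero p hg₁
    have hdvd_i := hdvd i
    rw [← derivation_sub_pPart p] at hi hdvd_i
    exact totalDegree_lt_of_dvd_pderiv hdvd_i hi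
  have hdh : d h = 0 := apply_eq_zero_of_smul_eq_hamiltonianDerivation hdiv hham
  exact mem_subalgebra_of_associated hassoc
    (mem_pthPowerSubalgebra_of_totalDegree_lt p hgmin hdh hdeg)

/-- Lemma 3 b).  Under the hypotheses of Lemma 3, the gcd
`ḡ = gcd(∂g/∂x, ∂g/∂y)` belongs to `K[x^p,y^p]`. -/
theorem lemma3b_gbar_in_constants
    {K : Type*} [CommRing K] [IsDomain K] [UniqueFactorizationMonoid K]
    (p : ℕ) [Fact p.Prime] [CharP K p]
    (d : Derivation K (MvPolynomial (Fin 2) K) (MvPolynomial (Fin 2) K))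
    (hd : d ≠ 0)
    (hdiv : pderiv (0 : Fin 2) (d (X 0)) + pderiv (1 : Fin 2) (d (X 1)) = 0)
    (hne : {q : MvPolynomial (Fin 2) K | d q = 0} ≠
      ↑(Algebra.adjoin K ({X 0 ^ p, X 1 ^ p} : Set (MvPolynomial (Fin 2) K))))
    (hcop : ∀ q : MvPolynomial (Fin 2) K, q ∣ d (X 0) → q ∣ d (X 1) → IsUnit q)
    (g : MvPolynomial (Fin 2) K)
    (hg₁ : g - pPart p g ≠ 0)
    (hg₂ : d (g - pPart p g) = 0)
    (hgmin : ∀ h : MvPolynomial (Fin 2) K, h - pPart p h ≠ 0 → d (h - pPart p h) = 0 →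
      (g - pPart p g).totalDegree ≤ (h - pPart p h).totalDegree)
    (gbar : MvPolynomial (Fin 2) K)
    (hgbar₁ : gbar ∣ pderiv (0 : Fin 2) g)
    (hgbar₂ : gbar ∣ pderiv (1 : Fin 2) g)
    (hgbar₃ : ∀ q : MvPolynomial (Fin 2) K,
      q ∣ pderiv (0 : Fin 2) g → q ∣ pderiv (1 : Fin 2) g → q ∣ gbar) :
    gbar ∈ Algebra.adjoin K ({X 0 ^ p, X 1 ^ p} : Set (MvPolynomial (Fin 2) K)) := by
  exact lemma3b_gbar_in_constants_general p d (by rw [divergence, Fin.sum_univ_two, hdiv])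
    (fun q => hcop q) g hg₁ hg₂ hgmin gbar hgbar₁ hgbar₂ hgbar₃
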